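/- Multivariate Wronskian via shifts: Let f₁,…,f_r ∈ F[x₁,…,x_n] have individual degree < d, and let t = (t₁,…,t_n) be fresh variables. Then over the field F(t), the span of the small-support shifted-derivative vectors {∂_{x^a}(f)(t) : |a|₀ ≤ ⌊log₂ r⌋, |a|_∞ < d} ⊆ F(t)^r equals the span of all shifted-derivative vectors {∂_{x^a}(f)(t) : a ∈ {0,…,d−1}ⁿ}; i.e., f is support-⌊log₂ r⌋ rank concentrated at the generic point t. -/

import Mathlib

noncomputable section

/-- The Hasse derivative `∂_{x^a}(f)` at the generic point `t`: the
coefficient of `x^a` in `f(x + t)`, a polynomial in the fresh variables `t`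
(identified with a second copy of `Fin n`). -/
def hasseGen {F : Type*} [Field F] {n : ℕ}
    (f : MvPolynomial (Fin n) F) (a : Fin n →₀ ℕ) : MvPolynomial (Fin n) F :=
  MvPolynomial.coeff a
    (MvPolynomial.sumAlgEquiv F (Fin n) (Fin n)
      (MvPolynomial.bind₁
        (fun j => MvPolynomial.X (Sum.inl j) + MvPolynomial.X (Sum.inr j)) f))

/-!
By duality it suffices that a linear form `lam` over `R[t]` which kills the derivative vectors of
small support kills them all. Since `t^a ∂_{x^a}(f)(t) = ∑_b (b choose a) t^b coeff_b(f)`, pairing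
this vector with `lam` gives `∑_b (b choose a) t^b ⟨lam, coeff_b(f)⟩`. Let `m` be the leading
exponent among the polynomials `t^b ⟨lam, coeff_b(f)⟩`. The vectors `coeff_b(f)` of those `b` for
which `t^m` actually occurs form a triangular system, hence are linearly independent, so there are
at most `r` such `b`. The coefficient of `t^m` is thus the coefficient of `x^a` in a nonzero
combination of at most `r` of the polynomials `(1 + x)^b`, and by repeatedly halving the set of
exponents one finds such a coefficient that is nonzero with `a` of support at most `log₂ r`.
-/

section SparseSums

variable {M : Type*} [AddCommMonoid M]

-- Let `k` be the largest index with `D k ≠ 0`: the binomial matrix is triangular.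
theorem exists_sum_choose_smul_ne_zero {I : Finset ℕ} {D : ℕ → M} {i : ℕ} (hi : i ∈ I)
    (hDi : D i ≠ 0) : ∃ k, ∑ l ∈ I, l.choose k • D l ≠ 0 := by
  classical
  obtain ⟨k, hk, hmax⟩ := (I.filter fun l => D l ≠ 0).exists_max_image id
    ⟨i, Finset.mem_filter.2 ⟨hi, hDi⟩⟩
  obtain ⟨hkI, hDk⟩ := Finset.mem_filter.1 hk
  have hvanish : ∀ l ∈ I, l ≠ k → l.choose k • D l = 0 := fun l hl hlk => by
    by_cases hDl : D l = 0
    · rw [hDl, smul_zero]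
    · have hlt : l < k := (hmax l (Finset.mem_filter.2 ⟨hl, hDl⟩)).lt_of_ne hlk
      rw [Nat.choose_eq_zero_of_lt hlt, zero_smul]
  refine ⟨k, ?_⟩
  rwa [Finset.sum_eq_single_of_mem k hkI hvanish, Nat.choose_self, one_smul]

theorem exists_two_mul_card_filter_eq_le {α β : Type*} [DecidableEq β] {B : Finset α} {g : α → β}
    {x y : α} (hx : x ∈ B) (hy : y ∈ B) (hxy : g x ≠ g y) :
    ∃ z ∈ B, 2 * (B.filter fun b => g b = g z).card ≤ B.card := by
  classical
  have hdisj : Disjoint (B.filter fun b => g b = g x) (B.filter fun b => g b = g y) :=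
    Finset.disjoint_filter.2 fun b _ hbx hby => hxy (hbx.symm.trans hby)
  have hcard := Finset.card_le_card
    (Finset.union_subset (B.filter_subset fun b => g b = g x) (B.filter_subset fun b => g b = g y))
  rw [Finset.card_union_of_disjoint hdisj] at hcard
  rcases le_total (B.filter fun b => g b = g x).card (B.filter fun b => g b = g y).card with h | h
  · exact ⟨x, hx, by lia⟩
  · exact ⟨y, hy, by lia⟩

variable {σ : Type*}

/-- The binomial coefficient `∏ⱼ (bⱼ choose aⱼ)` of two multi-indices. Indices `j` outside the
support of `a` would only contribute factors `1`. -/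
def multiIndexChoose (b a : σ →₀ ℕ) : ℕ :=
  a.prod fun j k => (b j).choose k

theorem multiIndexChoose_zero_right (b : σ →₀ ℕ) : multiIndexChoose b 0 = 1 :=
  Finsupp.prod_zero_index

theorem multiIndexChoose_eq_choose_mul_erase (b a : σ →₀ ℕ) (j : σ) :
    multiIndexChoose b a = (b j).choose (a j) * multiIndexChoose b (a.erase j) :=
  (Finsupp.mul_prod_erase' a j _ fun _ => Nat.choose_zero_right _).symm

theorem multiIndexChoose_update (b a : σ →₀ ℕ) (j : σ) (k : ℕ) :
    multiIndexChoose b (a.update j k) = (b j).choose k * multiIndexChoose b (a.erase j) := by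
  classical
  rw [multiIndexChoose_eq_choose_mul_erase b _ j, Finsupp.erase_update_eq_erase, Finsupp.coe_update,
    Function.update_self]

theorem multiIndexChoose_single_add {b : σ →₀ ℕ} {j : σ} (hj : b j = 0) (n : ℕ) (a : σ →₀ ℕ) :
    multiIndexChoose (Finsupp.single j n + b) a =
      n.choose (a j) * multiIndexChoose b (a.erase j) := by
  rw [multiIndexChoose_eq_choose_mul_erase _ a j, Finsupp.add_apply, Finsupp.single_eq_same, hj,
    add_zero]
  refine congrArg _ (Finsupp.prod_congr fun i hi => ?_)
  have hij : i ≠ j := fun h => by simp [h] at hi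
  rw [Finsupp.add_apply, Finsupp.single_eq_of_ne hij, zero_add]

theorem multiIndexChoose_ne_zero_iff {b a : σ →₀ ℕ} : multiIndexChoose b a ≠ 0 ↔ a ≤ b := by
  simp only [multiIndexChoose, Finsupp.prod, Finset.prod_ne_zero_iff, Nat.choose_ne_zero_iff,
    Finsupp.le_iff]

-- Induct on a fibre of a coordinate that is not constant on `B`, chosen to have at most half the
-- elements of `B`, and then reselect the exponent in that coordinate alone.
theorem exists_two_pow_card_support_le_and_sum_multiIndexChoose_smul_ne_zero {B : Finset (σ →₀ ℕ)}
    (hB : B.Nonempty) {c : (σ →₀ ℕ) → M} (hc : ∀ b ∈ B, c b ≠ 0) :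
    ∃ a : σ →₀ ℕ, 2 ^ a.support.card ≤ B.card ∧ ∑ b ∈ B, multiIndexChoose b a • c b ≠ 0 := by
  classical
  induction B using Finset.strongInduction with
  | H B ih =>
  rcases hB.exists_eq_singleton_or_nontrivial with ⟨b, rfl⟩ | ⟨x, hx, y, hy, hxy⟩
  · exact ⟨0, by simp, by simpa [multiIndexChoose_zero_right] using hc⟩
  obtain ⟨j, hj⟩ := DFunLike.ne_iff.1 hxy
  obtain ⟨z, hz, hcard⟩ := exists_two_mul_card_filter_eq_le (g := fun b : σ →₀ ℕ => b j) hx hy hj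
  set fiber : ℕ → Finset (σ →₀ ℕ) := fun l => B.filter fun b => b j = l
  have hproper : fiber (z j) ⊂ B := Finset.filter_ssubset.2 <| by
    by_contra! hconst
    exact hj ((hconst x hx).trans (hconst y hy).symm)
  obtain ⟨a, ha, hsum⟩ := ih (fiber (z j)) hproper ⟨z, Finset.mem_filter.2 ⟨hz, rfl⟩⟩
    fun b hb => hc b (Finset.mem_filter.1 hb).1
  have hfiber (l k : ℕ) : ∑ b ∈ fiber l, ((b j).choose k * multiIndexChoose b (a.erase j)) • c b =
      l.choose k • ∑ b ∈ fiber l, multiIndexChoose b (a.erase j) • c b := by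
    rw [Finset.smul_sum]
    exact Finset.sum_congr rfl fun b hb => by rw [(Finset.mem_filter.1 hb).2, mul_smul]
  have herase : ∑ b ∈ fiber (z j), multiIndexChoose b (a.erase j) • c b ≠ 0 := fun hzero =>
    hsum <| by simp only [multiIndexChoose_eq_choose_mul_erase _ a j, hfiber, hzero, smul_zero]
  obtain ⟨k, hk⟩ := exists_sum_choose_smul_ne_zero
    (D := fun l => ∑ b ∈ fiber l, multiIndexChoose b (a.erase j) • c b)
    (Finset.mem_image_of_mem (fun b => b j) hz) herase
  refine ⟨a.update j k, ?_, ?_⟩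
  · calc 2 ^ (a.update j k).support.card
        ≤ 2 ^ (a.support.card + 1) := Nat.pow_le_pow_right two_pos <|
          (Finset.card_le_card (Finsupp.support_update_subset a j)).trans
            (Finset.card_insert_le _ _)
      _ = 2 * 2 ^ a.support.card := pow_succ' _ _
      _ ≤ 2 * (fiber (z j)).card := Nat.mul_le_mul_left 2 ha
      _ ≤ B.card := hcard
  · simp only [multiIndexChoose_update]
    rw [← Finset.sum_fiberwise_of_maps_to fun b hb => Finset.mem_image_of_mem (fun b => b j) hb]
    simpa only [fiber, hfiber] using hk

end SparseSums

section LinearAlgebra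

theorem linearIndependent_of_triangular {R M κ Λ : Type*} [Ring R] [NoZeroDivisors R]
    [AddCommGroup M] [Module R M] [LinearOrder Λ] {v : κ → M} {φ : κ → M →ₗ[R] R} {rank : κ → Λ}
    (hrank : Function.Injective rank) (hdiag : ∀ b, φ b (v b) ≠ 0)
    (htri : ∀ b b', rank b < rank b' → φ b (v b') = 0) : LinearIndependent R v := by
  refine linearIndependent_iff.2 fun l hl => ?_
  by_contra hne
  obtain ⟨b, hb, hmin⟩ := l.support.exists_min_image rank (Finsupp.support_nonempty_iff.2 hne)
  have hlater : ∀ b' ∈ l.support, b' ≠ b → l b' * φ b (v b') = 0 := fun b' hb' hbb' => by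
    rw [htri b b' ((hmin b' hb').lt_of_ne (hrank.ne hbb'.symm)), mul_zero]
  have hpair : l b * φ b (v b) = 0 := by
    rw [← Finset.sum_eq_single_of_mem b hb hlater]
    simpa [Finsupp.linearCombination_apply, Finsupp.sum] using congrArg (φ b) hl
  exact mul_ne_zero (Finsupp.mem_support_iff.1 hb) (hdiag b) hpair

-- Over `K`, a vector outside a subspace is separated from it by a linear form; clearing
-- denominators gives the form coefficients in `A`.
theorem algebraMap_comp_mem_span_of_forall_dotProduct {A K ι : Type*} [CommRing A]
    [Field K] [Algebra A K] [IsFractionRing A K] [Fintype ι] {S : Set (ι → A)} {v : ι → A}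
    (h : ∀ lam : ι → A, (∀ u ∈ S, lam ⬝ᵥ u = 0) → lam ⬝ᵥ v = 0) :
    (algebraMap A K ∘ v) ∈ Submodule.span K ((algebraMap A K ∘ ·) '' S) := by
  classical
  by_contra hv
  obtain ⟨φ, hφv, hφS⟩ := Submodule.exists_le_ker_of_notMem hv
  obtain ⟨q, hq⟩ := IsLocalization.exist_integer_multiples_of_finite (nonZeroDivisors A)
    fun i => φ fun j => if i = j then 1 else 0
  choose lam hlam using hq
  have hlamφ (u : ι → A) :
      algebraMap A K (lam ⬝ᵥ u) = algebraMap A K q * φ (algebraMap A K ∘ u) := by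
    rw [LinearMap.pi_apply_eq_sum_univ φ, dotProduct, map_sum, Finset.mul_sum]
    refine Finset.sum_congr rfl fun i _ => ?_
    rw [map_mul, hlam, Algebra.smul_def, smul_eq_mul, Function.comp_apply]
    ring
  have hlamS : ∀ u ∈ S, lam ⬝ᵥ u = 0 := fun u hu => by
    apply IsFractionRing.injective A K
    rw [hlamφ, LinearMap.mem_ker.1 (hφS (Submodule.subset_span ⟨u, hu, rfl⟩)), mul_zero, map_zero]
  have hzero := hlamφ v
  rw [h lam hlamS, map_zero] at hzero
  exact mul_ne_zero (IsLocalization.map_units K q).ne_zero hφv hzero.symm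

end LinearAlgebra

section HasseDerivatives

open MvPolynomial

variable {σ R : Type*} [CommSemiring R]

variable (σ R) in
/-- The shift `f ↦ f(x + t)`. The variables `x` are those of the outer polynomial ring, and the
fresh variables `t` those of its coefficient ring. -/
def genericShift : MvPolynomial σ R →ₐ[R] MvPolynomial σ (MvPolynomial σ R) :=
  aeval fun j => X j + C (X j)

theorem genericShift_monomial_single_add (j : σ) (n : ℕ) (b : σ →₀ ℕ) (c : R) :
    genericShift σ R (monomial (Finsupp.single j n + b) c) =
      (X j + C (X j)) ^ n * genericShift σ R (monomial b c) := by
  rw [← one_mul c, ← monomial_mul, map_mul, ← X_pow_eq_monomial, map_pow, one_mul]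
  simp only [genericShift, aeval_X]

/-- The Hasse derivative `f ↦ ∂_{x^a}(f)(t)` of multi-index `a`: the coefficient of `x^a` in
`f(x + t)`. -/
def mvHasseDeriv (a : σ →₀ ℕ) : MvPolynomial σ R →ₗ[R] MvPolynomial σ R :=
  (lcoeff (MvPolynomial σ R) a).restrictScalars R ∘ₗ (genericShift σ R).toLinearMap

theorem coeff_X_add_C_pow_mul {j : σ} {p : MvPolynomial σ R}
    (hp : ∀ e : σ →₀ ℕ, e j ≠ 0 → coeff e p = 0) (s : R) (n : ℕ) (a : σ →₀ ℕ) :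
    coeff a ((X j + C s) ^ n * p) = n.choose (a j) • (s ^ (n - a j) * coeff (a.erase j) p) := by
  classical
  have hterm (k : ℕ) : coeff a (X j ^ k * C s ^ (n - k) * (n.choose k : MvPolynomial σ R) * p) =
      if k = a j then n.choose (a j) • (s ^ (n - a j) * coeff (a.erase j) p) else 0 := by
    have hmonomial : X j ^ k * C s ^ (n - k) * (n.choose k : MvPolynomial σ R) * p =
        n.choose k • (monomial (Finsupp.single j k) (s ^ (n - k)) * p) := by
      rw [← C_mul_X_pow_eq_monomial, C_pow, nsmul_eq_mul]
      ring
    rw [hmonomial, coeff_smul, coeff_monomial_mul']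
    simp only [Finsupp.single_le_iff]
    rcases lt_trichotomy k (a j) with hlt | rfl | hgt
    · rw [if_neg hlt.ne, if_pos hlt.le, hp, mul_zero, smul_zero]
      rw [Finsupp.tsub_apply, Finsupp.single_eq_same]
      lia
    · rw [if_pos rfl, if_pos le_rfl, tsub_eq_of_eq_add (Finsupp.erase_add_single j a).symm]
    · rw [if_neg hgt.ne', if_neg hgt.not_ge, smul_zero]
  rw [add_pow, Finset.sum_mul, coeff_sum]
  simp only [hterm, Finset.sum_ite_eq', Finset.mem_range]
  refine ite_eq_left_iff.2 fun hlt => ?_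
  rw [Nat.choose_eq_zero_of_lt (by lia), zero_smul]

theorem mvHasseDeriv_monomial (a b : σ →₀ ℕ) (c : R) :
    mvHasseDeriv a (monomial b c) = multiIndexChoose b a • monomial (b - a) c := by
  classical
  induction b using Finsupp.induction generalizing a with
  | zero =>
    have hconst : genericShift σ R (monomial 0 c) = C (C c) :=
      AlgHom.commutes (genericShift σ R) c
    refine (congrArg (coeff a) hconst).trans ?_
    rw [coeff_C, zero_tsub]
    by_cases ha : a = 0
    · rw [if_pos ha.symm, ha, multiIndexChoose_zero_right, one_smul, C_apply]
    · have hchoose : multiIndexChoose 0 a = 0 :=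
        not_ne_iff.1 (multiIndexChoose_ne_zero_iff.not.2 (nonpos_iff_eq_zero.not.2 ha))
      rw [if_neg (Ne.symm ha), hchoose, zero_smul]
  | single_add j n b hj hn ih =>
    rw [Finsupp.notMem_support_iff] at hj
    have hvanish : ∀ e : σ →₀ ℕ, e j ≠ 0 → coeff e (genericShift σ R (monomial b c)) = 0 :=
      fun e he => by
        refine (ih e).trans ?_
        rw [multiIndexChoose_eq_choose_mul_erase _ _ j, hj, Nat.choose_eq_zero_of_lt (by lia),
          zero_mul, zero_smul]
    have hexponent : Finsupp.single j (n - a j) + (b - a.erase j) = Finsupp.single j n + b - a := by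
      ext i
      rcases eq_or_ne i j with rfl | hi
      · simp [hj]
      · simp [hi]
    calc mvHasseDeriv a (monomial (Finsupp.single j n + b) c)
        = coeff a ((X j + C (X j)) ^ n * genericShift σ R (monomial b c)) :=
          congrArg (coeff a) (genericShift_monomial_single_add j n b c)
      _ = n.choose (a j) • (X j ^ (n - a j) * mvHasseDeriv (a.erase j) (monomial b c)) :=
          coeff_X_add_C_pow_mul hvanish (X j) n a
      _ = multiIndexChoose (Finsupp.single j n + b) a •
            monomial (Finsupp.single j n + b - a) c := by
          rw [ih, mul_smul_comm, smul_smul, X_pow_eq_monomial, monomial_mul, one_mul, hexponent,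
            multiIndexChoose_single_add hj]

theorem monomial_mul_mvHasseDeriv_monomial (a b : σ →₀ ℕ) (c : R) :
    monomial a 1 * mvHasseDeriv a (monomial b c) = multiIndexChoose b a • monomial b c := by
  rw [mvHasseDeriv_monomial, mul_smul_comm, monomial_mul, one_mul]
  by_cases hab : a ≤ b
  · rw [add_tsub_cancel_of_le hab]
  · rw [not_ne_iff.1 (multiIndexChoose_ne_zero_iff.not.2 hab), zero_smul, zero_smul]

theorem monomial_mul_mvHasseDeriv {f : MvPolynomial σ R} {T : Finset (σ →₀ ℕ)}
    (hT : f.support ⊆ T) (a : σ →₀ ℕ) :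
    monomial a 1 * mvHasseDeriv a f =
      ∑ b ∈ T, multiIndexChoose b a • monomial b (coeff b f) := by
  have hf : f = ∑ b ∈ T, monomial b (coeff b f) := f.as_sum.trans <|
    Finset.sum_subset hT fun b _ hb => by rw [notMem_support_iff.1 hb, map_zero]
  conv_lhs => rw [hf, map_sum, Finset.mul_sum]
  simp only [monomial_mul_mvHasseDeriv_monomial]

theorem monomial_mul_dotProduct_mvHasseDeriv {ι : Type*} [Fintype ι] (lam f : ι → MvPolynomial σ R)
    {T : Finset (σ →₀ ℕ)} (hT : ∀ i, (f i).support ⊆ T) (a : σ →₀ ℕ) :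
    monomial a 1 * (lam ⬝ᵥ fun i => mvHasseDeriv a (f i)) =
      ∑ b ∈ T, multiIndexChoose b a •
        (monomial b 1 * Fintype.linearCombination R lam fun i => coeff b (f i)) := by
  have hmonomial (b : σ →₀ ℕ) (i : ι) : lam i * monomial b (coeff b (f i)) =
      monomial b 1 * coeff b (f i) • lam i := by
    rw [smul_eq_C_mul, mul_left_comm, ← mul_assoc, C_mul_monomial, mul_one, mul_comm]
  simp only [dotProduct, Finset.mul_sum, mul_left_comm (monomial a 1) (lam _),
    monomial_mul_mvHasseDeriv (hT _), mul_smul_comm _ _ (monomial _ _), hmonomial]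
  rw [Finset.sum_comm]
  simp only [Fintype.linearCombination_apply, Finset.mul_sum, Finset.smul_sum]

theorem exists_mem_support_le_of_mvHasseDeriv_ne_zero {f : MvPolynomial σ R} {a : σ →₀ ℕ}
    (h : mvHasseDeriv a f ≠ 0) : ∃ b ∈ f.support, a ≤ b := by
  rw [f.as_sum, map_sum] at h
  obtain ⟨b, hb, hne⟩ := Finset.exists_ne_zero_of_sum_ne_zero h
  rw [mvHasseDeriv_monomial] at hne
  exact ⟨b, hb, multiIndexChoose_ne_zero_iff.1 (left_ne_zero_of_smul hne)⟩

theorem hasseGen_eq_mvHasseDeriv {F : Type*} [Field F] {n : ℕ} (f : MvPolynomial (Fin n) F)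
    (a : Fin n →₀ ℕ) : hasseGen f a = mvHasseDeriv a f := by
  have hshift : (sumAlgEquiv F (Fin n) (Fin n)).toAlgHom.comp
      (bind₁ fun j => X (Sum.inl j) + X (Sum.inr j)) = genericShift (Fin n) F :=
    algHom_ext fun j => by simp [genericShift]
  exact congrArg (coeff a) (DFunLike.congr_fun hshift f)

end HasseDerivatives

section RankConcentration

open MvPolynomial

variable {σ R : Type*} [CommRing R] [IsDomain R]

-- For `m` the leading exponent (in a lexicographic order) of the family `t^b L(v b)`, the
-- functionals `coeff (m - b) ∘ L` are triangular on the `v b`.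
theorem exists_coeff_monomial_mul_ne_zero_and_linearIndepOn {M : Type*} [AddCommGroup M]
    [Module R M] (L : M →ₗ[R] MvPolynomial σ R) {v : (σ →₀ ℕ) → M} {T : Finset (σ →₀ ℕ)}
    (hT : ∃ b ∈ T, L (v b) ≠ 0) :
    ∃ m, (∃ b ∈ T, coeff m (monomial b 1 * L (v b)) ≠ 0) ∧
      LinearIndepOn R v {b | b ∈ T ∧ coeff m (monomial b 1 * L (v b)) ≠ 0} := by
  classical
  let _ : LinearOrder σ := linearOrderOfSTO WellOrderingRel
  obtain ⟨m, hm, hmax⟩ := (T.biUnion fun b => (monomial b 1 * L (v b)).support).exists_max_image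
    toLex <| by
      obtain ⟨b, hb, hne⟩ := hT
      obtain ⟨e, he⟩ := support_nonempty.2 <|
        mul_ne_zero (monomial_eq_zero.not.2 (one_ne_zero (α := R))) hne
      exact ⟨e, Finset.mem_biUnion.2 ⟨b, hb, he⟩⟩
  obtain ⟨b₀, hb₀, hmb₀⟩ := Finset.mem_biUnion.1 hm
  refine ⟨m, ⟨b₀, hb₀, mem_support_iff.1 hmb₀⟩, ?_⟩
  have hlead {b : σ →₀ ℕ} (hb : coeff m (monomial b 1 * L (v b)) ≠ 0) :
      b ≤ m ∧ coeff (m - b) (L (v b)) ≠ 0 := by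
    simpa only [coeff_monomial_mul', one_mul, ite_ne_right_iff] using hb
  refine linearIndependent_of_triangular (φ := fun b => lcoeff R (m - b.1) ∘ₗ L)
    (rank := fun b => toLex b.1) (toLex.injective.comp Subtype.val_injective)
    (fun b => (hlead b.2.2).2) fun b b' hlt => ?_
  by_contra hne
  have hmem : b'.1 + (m - b.1) ∈ T.biUnion fun b => (monomial b 1 * L (v b)).support :=
    Finset.mem_biUnion.2 ⟨b', b'.2.1, by
      rwa [mem_support_iff, coeff_monomial_mul, one_mul]⟩
  have hbeyond : toLex m < toLex (b'.1 + (m - b.1)) := by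
    simpa only [← toLex_add, add_tsub_cancel_of_le (hlead b.2.2).1] using
      add_lt_add_left hlt (toLex (m - b.1))
  exact (hmax _ hmem).not_gt hbeyond

variable {ι : Type*} [Fintype ι]

theorem exists_two_pow_card_support_le_and_dotProduct_mvHasseDeriv_ne_zero
    {lam f : ι → MvPolynomial σ R} {a₀ : σ →₀ ℕ}
    (ha₀ : lam ⬝ᵥ (fun i => mvHasseDeriv a₀ (f i)) ≠ 0) :
    ∃ a : σ →₀ ℕ, 2 ^ a.support.card ≤ Fintype.card ι ∧
      lam ⬝ᵥ (fun i => mvHasseDeriv a (f i)) ≠ 0 := by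
  classical
  set T : Finset (σ →₀ ℕ) := Finset.univ.biUnion fun i => (f i).support
  set L := Fintype.linearCombination R lam
  set v : (σ →₀ ℕ) → ι → R := fun b i => coeff b (f i)
  have hexpand := monomial_mul_dotProduct_mvHasseDeriv lam f (T := T) fun i =>
    Finset.subset_biUnion_of_mem (fun i => (f i).support) (Finset.mem_univ i)
  have hT : ∃ b ∈ T, L (v b) ≠ 0 := by
    obtain ⟨b, hb, hne⟩ := Finset.exists_ne_zero_of_sum_ne_zero <| (hexpand a₀).symm.trans_ne <|
      mul_ne_zero (monomial_eq_zero.not.2 (one_ne_zero (α := R))) ha₀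
    exact ⟨b, hb, right_ne_zero_of_mul (right_ne_zero_of_smul hne)⟩
  obtain ⟨m, ⟨b₀, hb₀, hmb₀⟩, hindep⟩ := exists_coeff_monomial_mul_ne_zero_and_linearIndepOn L hT
  set B := T.filter fun b => coeff m (monomial b 1 * L (v b)) ≠ 0
  have hcard : B.card ≤ Fintype.card ι := by
    have hindepB : LinearIndepOn R v (B : Set (σ →₀ ℕ)) := by rwa [Finset.coe_filter]
    simpa using hindepB.fintype_card_le_finrank
  obtain ⟨a, ha, hsum⟩ := exists_two_pow_card_support_le_and_sum_multiIndexChoose_smul_ne_zero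
    (B := B) ⟨b₀, Finset.mem_filter.2 ⟨hb₀, hmb₀⟩⟩
    (c := fun b => coeff m (monomial b 1 * L (v b))) fun b hb => (Finset.mem_filter.1 hb).2
  refine ⟨a, ha.trans hcard, fun hzero => hsum ?_⟩
  have hcoeff := congrArg (coeff m) (hexpand a)
  rw [hzero, mul_zero, coeff_zero, coeff_sum] at hcoeff
  rw [Finset.sum_filter_of_ne fun b _ => right_ne_zero_of_smul]
  simpa only [coeff_smul] using hcoeff.symm

theorem stmt_18_general {K : Type*} [Field K] [Algebra (MvPolynomial σ R) K]
    [IsFractionRing (MvPolynomial σ R) K] (f : ι → MvPolynomial σ R) {A : Set (σ →₀ ℕ)}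
    (hA : IsLowerSet A) (hf : ∀ i, ((f i).support : Set (σ →₀ ℕ)) ⊆ A) :
    Submodule.span K {v : ι → K | ∃ a ∈ A, a.support.card ≤ Nat.log 2 (Fintype.card ι) ∧
        v = fun i => algebraMap (MvPolynomial σ R) K (mvHasseDeriv a (f i))}
      = Submodule.span K {v : ι → K | ∃ a ∈ A,
        v = fun i => algebraMap (MvPolynomial σ R) K (mvHasseDeriv a (f i))} := by
  refine le_antisymm (Submodule.span_mono fun v ⟨a, ha, _, hv⟩ => ⟨a, ha, hv⟩)
    (Submodule.span_le.2 ?_)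
  rintro _ ⟨a₀, -, rfl⟩
  set S : Set (ι → MvPolynomial σ R) := {u | ∃ a ∈ A,
    a.support.card ≤ Nat.log 2 (Fintype.card ι) ∧ u = fun i => mvHasseDeriv a (f i)}
  have hmem := algebraMap_comp_mem_span_of_forall_dotProduct (K := K) (S := S)
    (v := fun i => mvHasseDeriv a₀ (f i)) fun lam hlam => by
      by_contra hne
      obtain ⟨a, hcard, ha⟩ :=
        exists_two_pow_card_support_le_and_dotProduct_mvHasseDeriv_ne_zero hne
      obtain ⟨i, -, hi⟩ := Finset.exists_ne_zero_of_sum_ne_zero ha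
      obtain ⟨b, hb, hab⟩ := exists_mem_support_le_of_mvHasseDeriv_ne_zero (right_ne_zero_of_mul hi)
      exact ha <| hlam _
        ⟨a, hA hab (hf i hb), Nat.le_log_of_pow_le one_lt_two hcard, rfl⟩
  refine Submodule.span_mono ?_ hmem
  rintro _ ⟨_, ⟨a, haA, hcard, rfl⟩, rfl⟩
  exact ⟨a, haA, hcard, rfl⟩

end RankConcentration

/-- multivariate Wronskian via shifts: for `f₁,…,f_r` of
individual degree `< d`, over the rational function field `F(t)` the span of
the shifted-derivative vectors `∂_{x^a}(f)(t)` with `|a|₀ ≤ ⌊log₂ r⌋` and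
`|a|_∞ < d` equals the span of all `∂_{x^a}(f)(t)` with `a ∈ {0,…,d-1}ⁿ`:
`f` is support-`⌊log₂ r⌋` rank concentrated at the generic point `t`. -/
theorem stmt_18 {F : Type*} [Field F] {n r d : ℕ}
    (f : Fin r → MvPolynomial (Fin n) F)
    (hdeg : ∀ i j, MvPolynomial.degreeOf j (f i) < d) :
    Submodule.span (FractionRing (MvPolynomial (Fin n) F))
        {v : Fin r → FractionRing (MvPolynomial (Fin n) F) |
          ∃ a : Fin n →₀ ℕ, (∀ j, a j < d) ∧ a.support.card ≤ Nat.log 2 r ∧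
            v = fun i => algebraMap (MvPolynomial (Fin n) F) _
              (hasseGen (f i) a)}
      = Submodule.span (FractionRing (MvPolynomial (Fin n) F))
        {v : Fin r → FractionRing (MvPolynomial (Fin n) F) |
          ∃ a : Fin n →₀ ℕ, (∀ j, a j < d) ∧
            v = fun i => algebraMap (MvPolynomial (Fin n) F) _
              (hasseGen (f i) a)} := by
  simpa only [hasseGen_eq_mvHasseDeriv, Fintype.card_fin, Set.mem_ofPred_eq] using
    stmt_18_general (A := {a | ∀ j, a j < d}) f (fun _ _ hle ha j => (hle j).trans_lt (ha j))
      fun i _ hb j => (MvPolynomial.monomial_le_degreeOf j hb).trans_lt (hdeg i j)
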